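/- Convexity of the YMA rate in the cache size: Let n and N be positive integers with n ≤ N. The function R : [0,N) → ℝ defined by R(0) := n and R(M) := ((N−M)/M)·(1 − (1 − M/N)^n) for M ∈ (0,N) is convex on [0,N). (In the paper, n = N̄ = min(K,N) and R(M) = R_YMA(K,N,M); this convexity justifies upper-bounding R_YMA by its piecewise-linear interpolation through the corner points.) -/

import Mathlib

/-!
With `q = 1 - M / N` we have `(N - M) / M = q / (1 - q)`, so the rate is the geometric sum
`q + q ^ 2 + ⋯ + q ^ n`, whose value at `M = 0` is `n`. For `M ≤ N` each summand is a convex power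
on `[0, ∞)` composed with an affine map of `M`.
-/

theorem convexOn_finset_sum {𝕜 E β ι : Type*} [Semiring 𝕜] [PartialOrder 𝕜] [AddCommMonoid E]
    [SMul 𝕜 E] [AddCommMonoid β] [PartialOrder β] [IsOrderedAddMonoid β] [DistribMulAction 𝕜 β]
    {s : Set E} (hs : Convex 𝕜 s) {t : Finset ι} {f : ι → E → β}
    (hf : ∀ i ∈ t, ConvexOn 𝕜 s (f i)) : ConvexOn 𝕜 s fun x ↦ ∑ i ∈ t, f i x := by
  induction t using Finset.cons_induction with
  | empty => exact ⟨hs, by simp⟩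
  | cons i t hi ih =>
    simp only [Finset.sum_cons]
    exact (hf i (Finset.mem_cons_self i t)).add
      (ih fun j hj ↦ hf j (Finset.mem_cons_of_mem hj))

theorem convexOn_sum_range_pow_succ {𝕜 : Type*} [CommRing 𝕜] [LinearOrder 𝕜]
    [IsStrictOrderedRing 𝕜] (n : ℕ) :
    ConvexOn 𝕜 (Set.Ici 0) fun x : 𝕜 ↦ ∑ i ∈ Finset.range n, x ^ (i + 1) :=
  convexOn_finset_sum (convex_Ici 0) fun i _ ↦ convexOn_pow (i + 1)

theorem sum_range_pow_succ_eq {D : Type*} [DivisionRing D] {x : D} (hx : x ≠ 1) (n : ℕ) :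
    ∑ i ∈ Finset.range n, x ^ (i + 1) = x / (1 - x) * (1 - x ^ n) := by
  have hx' : 1 - x ≠ 0 := sub_ne_zero.2 hx.symm
  calc
    ∑ i ∈ Finset.range n, x ^ (i + 1) = x * ∑ i ∈ Finset.range n, x ^ i := by
      simp only [Finset.mul_sum, pow_succ']
    _ = x / (1 - x) * ((1 - x) * ∑ i ∈ Finset.range n, x ^ i) := by
      rw [← mul_assoc, div_mul_cancel₀ x hx']
    _ = x / (1 - x) * (1 - x ^ n) := by rw [mul_neg_geom_sum]

/-- The Yu–Maddah-Ali–Avestimehr rate with `N` files at cache size `M`, where `n` is the largest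
number `min K N` of distinct files that the `K` users can request. The library size `N` is a scalar,
and the value `n` at `M = 0` is prescribed because division by zero would give `0` there. -/
def ymaRate {𝕜 : Type*} [Field 𝕜] [DecidableEq 𝕜] (n : ℕ) (N M : 𝕜) : 𝕜 :=
  if M = 0 then (n : 𝕜) else (N - M) / M * (1 - (1 - M / N) ^ n)

theorem ymaRate_eq_sum_range_pow_succ {𝕜 : Type*} [Field 𝕜] [DecidableEq 𝕜] (n : ℕ) {N : 𝕜}
    (hN : N ≠ 0) (M : 𝕜) :
    ymaRate n N M = ∑ i ∈ Finset.range n, (1 - M / N) ^ (i + 1) := by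
  unfold ymaRate
  split_ifs with hM
  · simp [hM]
  · have hq : 1 - M / N ≠ 1 := by simp [hM, hN]
    have hratio : (N - M) / M = (1 - M / N) / (1 - (1 - M / N)) := by
      rw [sub_sub_cancel, one_sub_div hN, div_div_div_cancel_right₀ hN]
    rw [sum_range_pow_succ_eq hq, hratio]

theorem yma_rate_convex_general {𝕜 : Type*} [Field 𝕜] [LinearOrder 𝕜] [IsStrictOrderedRing 𝕜]
    (n : ℕ) {N : 𝕜} (hN : 0 < N) : ConvexOn 𝕜 (Set.Iic N) (ymaRate n N) := by
  let q : 𝕜 →ᵃ[𝕜] 𝕜 := AffineMap.lineMap 1 (1 - N⁻¹)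
  have q_apply (M : 𝕜) : q M = 1 - M / N := by
    simp only [q, AffineMap.lineMap_apply_ring']
    ring
  have preimage_q : q ⁻¹' Set.Ici 0 = Set.Iic N := by
    ext M
    simp only [Set.mem_preimage, Set.mem_Ici, Set.mem_Iic, q_apply, sub_nonneg, div_le_one hN]
  have rate_eq : ymaRate n N = (fun x ↦ ∑ i ∈ Finset.range n, x ^ (i + 1)) ∘ q := by
    ext M
    simp only [Function.comp_apply, q_apply, ymaRate_eq_sum_range_pow_succ n hN.ne']
  rw [← preimage_q, rate_eq]
  exact (convexOn_sum_range_pow_succ n).comp_affineMap q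

/-- **Convexity of the YMA rate in the cache size.** For positive integers `n ≤ N`,
the function `R : [0,N) → ℝ` with `R(0) = n` and
`R(M) = ((N−M)/M)·(1 − (1 − M/N)^n)` for `M ∈ (0,N)` is convex on `[0,N)`. -/
theorem yma_rate_convex (n N : ℕ) (hn : 0 < n) (hnN : n ≤ N) :
    ConvexOn ℝ (Set.Ico (0 : ℝ) (N : ℝ))
      (fun M : ℝ =>
        if M = 0 then (n : ℝ)
        else ((N : ℝ) - M) / M * (1 - (1 - M / (N : ℝ)) ^ n)) := by
  have hN : (0 : ℝ) < N := by exact_mod_cast hn.trans_le hnN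
  exact (yma_rate_convex_general n hN).subset
    (Set.Ico_subset_Iio_self.trans Set.Iio_subset_Iic_self) (convex_Ico 0 (N : ℝ))
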